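/- Let C = ev_{α,v}(P_{t,h,η}^{n,k}) be a TGRS code with ℓ ≤ k ≤ n ≤ q, pairwise distinct hooks h_j ∈ {0,…,k−1}, pairwise distinct twists t_j ∈ {1,…,n−k}, and all coefficients η_j ≠ 0, and let t_max be the largest entry of t. Let I ⊆ {1,…,n} with |I| ≤ k − ℓ and suppose dim(C_I) = k − |I|. Then dim(C_I ⋆ C_I) ≤ min{ (ℓ+2)(k−|I|) − 1 − ℓ(ℓ−1)/2, 2k + t_max − 1 − 2|I| + ℓ(ℓ+1)/2, 2(k + t_max − |I|) − 1 }. -/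

import Mathlib

open Polynomial

/-- The evaluation map `f ↦ (v_i f(α_i))_i`. -/
noncomputable def ev {F : Type*} [Field F] {ι : Type*} (α v : ι → F) :
    Polynomial F →ₗ[F] (ι → F) where
  toFun f := fun i => v i * f.eval (α i)
  map_add' f g := by ext i; simp [mul_add]
  map_smul' a f := by ext i; simp [smul_eq_mul]; ring

/-- The Schur (componentwise) product of two subspaces of `F^ι`. -/
def schurProduct (F : Type*) [Field F] {ι : Type*} (A B : Submodule F (ι → F)) :
    Submodule F (ι → F) :=
  Submodule.span F {x | ∃ a ∈ A, ∃ b ∈ B, x = a * b}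

/-- The shortening of a code `C ⊆ F^ι` at `I`. -/
noncomputable def shorten {F : Type*} [Field F] {ι : Type*}
    (C : Submodule F (ι → F)) (I : Set ι) :
    Submodule F ({i : ι // i ∉ I} → F) :=
  ((C ⊓ LinearMap.ker (LinearMap.funLeft F F (fun i : I => (i : ι)))).map
    (LinearMap.funLeft F F (fun j : {i : ι // i ∉ I} => (j : ι))))

/-- The linear map `(f_0,…,f_{k−1}) ↦ Σ_{i<k} f_i x^i + Σ_j η_j f_{h_j} x^{k−1+t_j}`,
whose range is the twisted polynomial space `P_{t,h,η}^{n,k}`. -/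
noncomputable def twistedMap {F : Type*} [Field F] (k : ℕ) {ℓ : ℕ}
    (t : Fin ℓ → ℕ) (h : Fin ℓ → Fin k) (η : Fin ℓ → F) :
    (Fin k → F) →ₗ[F] Polynomial F :=
  (∑ i : Fin k, (Polynomial.monomial (i : ℕ)).comp (LinearMap.proj i)) +
  ∑ j : Fin ℓ, (Polynomial.monomial (k - 1 + t j)).comp (η j • LinearMap.proj (h j))

theorem aux_compl {F V : Type*} [Field F] [AddCommGroup V] [Module F V] [FiniteDimensional F V]
    (A B : Submodule F V) (hAB : A ≤ B) :
    ∃ T : Submodule F V, A ⊔ T = B ∧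
      Module.finrank F A + Module.finrank F T = Module.finrank F B := by
  obtain ⟨T, hT⟩ := Submodule.exists_isCompl A
  have h1 : A ⊔ (T ⊓ B) = B := by
    rw [← sup_inf_assoc_of_le T hAB, hT.sup_eq_top, top_inf_eq]
  refine ⟨T ⊓ B, h1, ?_⟩
  have h2 := Submodule.finrank_sup_add_finrank_inf_eq A (T ⊓ B)
  rw [h1, ← inf_assoc, hT.inf_eq_bot, bot_inf_eq, finrank_bot] at h2
  omega

theorem aux_sub {F V : Type*} [Field F] [AddCommGroup V] [Module F V] [FiniteDimensional F V]
    (A : Submodule F V) (d : ℕ) (hd : d ≤ Module.finrank F A) :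
    ∃ T : Submodule F V, T ≤ A ∧ Module.finrank F T = d := by
  obtain ⟨f, hf⟩ := exists_linearIndependent_of_le_finrank (R := F) (M := A) hd
  have hg : LinearIndependent F (fun i => (f i : V)) :=
    hf.map' A.subtype (Submodule.ker_subtype A)
  refine ⟨Submodule.span F (Set.range fun i => (f i : V)), ?_, ?_⟩
  · rw [Submodule.span_le]
    rintro _ ⟨i, rfl⟩
    exact (f i).2
  · rw [finrank_span_eq_card hg, Fintype.card_fin]

theorem aux_basis {F V : Type*} [Field F] [AddCommGroup V] [Module F V] [FiniteDimensional F V]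
    (A : Submodule F V) :
    ∃ b : Fin (Module.finrank F A) → V, Submodule.span F (Set.range b) = A := by
  let b := Module.finBasis F A
  refine ⟨fun i => (b i : V), ?_⟩
  have := congrArg (Submodule.map A.subtype) b.span_eq
  rw [Submodule.map_span, ← Set.range_comp, Submodule.map_top, Submodule.range_subtype] at this
  exact this

theorem aux_mul {F V : Type*} [Field F] [CommRing V] [Algebra F V] [FiniteDimensional F V]
    (A B : Submodule F V) :
    Module.finrank F (A * B : Submodule F V) ≤ Module.finrank F A * Module.finrank F B := by
  obtain ⟨a, ha⟩ := aux_basis A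
  obtain ⟨b, hb⟩ := aux_basis B
  have h1 : A * B = Submodule.span F
      (Set.range fun p : Fin (Module.finrank F A) × Fin (Module.finrank F B) => a p.1 * b p.2) := by
    conv_lhs => rw [← ha, ← hb, Submodule.span_mul_span]
    congr 1
    ext x
    simp [Set.mem_mul]
  rw [h1]
  refine (finrank_range_le_card _).trans ?_
  simp

theorem aux_sq {F V : Type*} [Field F] [CommRing V] [Algebra F V] [FiniteDimensional F V]
    (A : Submodule F V) :
    Module.finrank F (A * A : Submodule F V) ≤ (Module.finrank F A + 1).choose 2 := by
  obtain ⟨a, ha⟩ := aux_basis A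
  have h1 : A * A = Submodule.span F
      (Set.range fun p : Sym2 (Fin (Module.finrank F A)) =>
        Sym2.lift ⟨fun i j => a i * a j, fun i j => mul_comm _ _⟩ p) := by
    conv_lhs => rw [← ha, Submodule.span_mul_span]
    congr 1
    ext x
    constructor
    · rintro ⟨_, ⟨i, rfl⟩, _, ⟨j, rfl⟩, rfl⟩
      exact ⟨s(i, j), rfl⟩
    · rintro ⟨p, rfl⟩
      induction p using Sym2.ind with
      | _ i j => exact ⟨_, ⟨i, rfl⟩, _, ⟨j, rfl⟩, rfl⟩
  rw [h1]
  refine (finrank_range_le_card _).trans ?_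
  rw [Sym2.card, Fintype.card_fin]

theorem aux_schur {F : Type*} [Field F] {ι : Type*} (A B : Submodule F (ι → F)) :
    schurProduct F A B = A * B := by
  apply le_antisymm
  · refine Submodule.span_le.2 ?_
    rintro _ ⟨a, ha, b, hb, rfl⟩
    exact Submodule.mul_mem_mul ha hb
  · rw [Submodule.mul_le]
    intro a ha b hb
    exact Submodule.subset_span ⟨a, ha, b, hb, rfl⟩

theorem aux_deg {F : Type*} [Field F] {ι : Type*} [Finite ι] (α w : ι → F) (a b : ℕ)
    (A B : Submodule F (ι → F)) (hA : A ≤ (degreeLT F a).map (ev α w))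
    (hB : B ≤ (degreeLT F b).map (ev α w)) :
    Module.finrank F (A * B : Submodule F (ι → F)) ≤ a + b - 1 := by
  have h1 : A * B ≤ (degreeLT F (a + b - 1)).map (ev α (w * w)) := by
    rw [Submodule.mul_le]
    intro x hx y hy
    obtain ⟨f, hf, rfl⟩ := hA hx
    obtain ⟨g, hg, rfl⟩ := hB hy
    refine ⟨f * g, ?_, ?_⟩
    · rw [SetLike.mem_coe, mem_degreeLT] at *
      by_cases hf0 : f = 0
      · simp [hf0]
      by_cases hg0 : g = 0
      · simp [hg0]
      rw [degree_eq_natDegree hf0, Nat.cast_lt] at hf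
      rw [degree_eq_natDegree hg0, Nat.cast_lt] at hg
      rw [degree_eq_natDegree (mul_ne_zero hf0 hg0), Nat.cast_lt, natDegree_mul hf0 hg0]
      omega
    · ext i
      simp [ev]
      ring
  have : FiniteDimensional F (degreeLT F (a + b - 1)) :=
    (degreeLTEquiv F (a + b - 1)).symm.finiteDimensional
  refine (Submodule.finrank_mono h1).trans ((Submodule.finrank_map_le _ _).trans ?_)
  rw [(degreeLTEquiv F (a + b - 1)).finrank_eq]
  simp

theorem aux_div {F : Type*} [Field F] {n : ℕ} (α v : Fin n → F) (hα : Function.Injective α)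
    (hv : ∀ i, v i ≠ 0) (I : Finset (Fin n)) (p : F[X]) (N : ℕ) (hp : p ∈ degreeLT F N)
    (h0 : ∀ i ∈ I, ev α v p i = 0) :
    (fun j : {i : Fin n // i ∉ (I : Set (Fin n))} => ev α v p j) ∈
      (degreeLT F (N - I.card)).map
        (ev (fun j : {i : Fin n // i ∉ (I : Set (Fin n))} => α j)
          (fun j => v j * (∏ i ∈ I, (X - C (α i))).eval (α j))) := by
  have hd : (∏ i ∈ I, (X - C (α i))) ∣ p := by
    refine Finset.prod_dvd_of_coprime ?_ ?_
    · intro i _ j _ hij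
      exact pairwise_coprime_X_sub_C hα hij
    · intro i hi
      rw [dvd_iff_isRoot]
      have := h0 i hi
      simpa [ev, hv i] using this
  obtain ⟨g, rfl⟩ := hd
  refine ⟨g, ?_, ?_⟩
  · rw [SetLike.mem_coe, mem_degreeLT] at *
    by_cases hg : g = 0
    · simp [hg]
    have hA : (∏ i ∈ I, (X - C (α i))) ≠ 0 := (monic_prod_X_sub_C α I).ne_zero
    rw [degree_eq_natDegree (mul_ne_zero hA hg), Nat.cast_lt, natDegree_mul hA hg,
      natDegree_finsetProd_X_sub_C_eq_card] at hp
    rw [degree_eq_natDegree hg, Nat.cast_lt]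
    omega
  · ext j
    simp [ev]
    ring

theorem aux_main {F : Type*} [Field F] {n k ℓ : ℕ}
    (α v : Fin n → F) (hα : Function.Injective α) (hv : ∀ i, v i ≠ 0)
    (h : Fin ℓ → Fin k) (t : Fin ℓ → ℕ) (η : Fin ℓ → F)
    (tmax : ℕ) (htmax : ∀ j, t j ≤ tmax) (htpos : 1 ≤ tmax) (I : Finset (Fin n))
    (D : Submodule F ({i : Fin n // i ∉ (I : Set (Fin n))} → F))
    (hD : D = shorten ((LinearMap.range (twistedMap k t h η)).map (ev α v)) (I : Set (Fin n))) :
    ∃ w : {i : Fin n // i ∉ (I : Set (Fin n))} → F,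
      D ≤ (degreeLT F (k + tmax - I.card)).map (ev (fun j : {i : Fin n // i ∉ (I : Set (Fin n))} => α j) w) ∧
      ∃ D0 ≤ D, Module.finrank F D ≤ Module.finrank F D0 + ℓ ∧
        D0 ≤ (degreeLT F (k - I.card)).map (ev (fun j : {i : Fin n // i ∉ (I : Set (Fin n))} => α j) w) := by
  have tw : ∀ f, twistedMap k t h η f = ∑ i : Fin k, monomial (i : ℕ) (f i) +
      ∑ j : Fin ℓ, monomial (k - 1 + t j) (η j * f (h j)) := by
    intro f
    simp [twistedMap]
  have hlow : ∀ f : Fin k → F, ∑ i : Fin k, monomial (i : ℕ) (f i) ∈ degreeLT F k := by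
    intro f
    refine Submodule.sum_mem _ fun i _ => ?_
    rw [mem_degreeLT]
    exact (degree_monomial_le _ _).trans_lt (by exact_mod_cast i.2)
  have hbig : ∀ f, twistedMap k t h η f ∈ degreeLT F (k + tmax) := by
    intro f
    rw [tw]
    refine Submodule.add_mem _ (degreeLT_mono (by omega) (hlow f)) ?_
    refine Submodule.sum_mem _ fun j _ => ?_
    rw [mem_degreeLT]
    refine (degree_monomial_le _ _).trans_lt ?_
    have := htmax j
    have := (h j).2
    rw [Nat.cast_lt]
    omega
  let φ : (Fin k → F) →ₗ[F] (Fin n → F) := (ev α v).comp (twistedMap k t h η)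
  let r := LinearMap.funLeft F F (fun j : {i : Fin n // i ∉ (I : Set (Fin n))} => (j : Fin n))
  let S : Submodule F (Fin k → F) := (LinearMap.ker (LinearMap.funLeft F F
    (fun i : (I : Set (Fin n)) => (i : Fin n)))).comap φ
  have hS : ∀ f ∈ S, ∀ i ∈ I, ev α v (twistedMap k t h η f) i = 0 := by
    intro f hf i hi
    have hf' : LinearMap.funLeft F F (fun i : (I : Set (Fin n)) => (i : Fin n)) (φ f) = 0 := hf
    exact congrFun hf' ⟨i, hi⟩
  have hDS : D = S.map (r.comp φ) := by
    rw [hD, shorten, ← LinearMap.range_comp, Submodule.map_comp, Submodule.map_comap_eq]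
  let π : (Fin k → F) →ₗ[F] (Fin ℓ → F) := LinearMap.funLeft F F h
  obtain ⟨T, hT, hTr⟩ := aux_compl (S ⊓ LinearMap.ker π) S inf_le_left
  have hTl : Module.finrank F T ≤ ℓ := by
    have h1 := (π.domRestrict S).finrank_range_add_finrank_ker
    have h2 : Module.finrank F (LinearMap.range (π.domRestrict S)) ≤ ℓ := by
      simpa using Submodule.finrank_le (LinearMap.range (π.domRestrict S))
    have h3 : Module.finrank F (LinearMap.ker (π.domRestrict S)) =
        Module.finrank F (S ⊓ LinearMap.ker π : Submodule F (Fin k → F)) := by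
      have : (LinearMap.ker (π.domRestrict S)).map S.subtype = S ⊓ LinearMap.ker π := by
        ext x
        simp [LinearMap.domRestrict_apply, and_comm]
      rw [← this]
      exact (Submodule.finrank_map_subtype_eq _ _).symm
    omega
  refine ⟨fun j => v j * (∏ i ∈ I, (X - C (α i))).eval (α j), ?_,
    (S ⊓ LinearMap.ker π).map (r.comp φ), ?_, ?_, ?_⟩
  · rw [hDS]
    rintro _ ⟨f, hf, rfl⟩
    exact aux_div α v hα hv I _ _ (hbig f) (hS f hf)
  · rw [hDS]
    exact Submodule.map_mono inf_le_left
  · rw [hDS]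
    conv_lhs => rw [← hT, Submodule.map_sup]
    refine (Submodule.finrank_add_le_finrank_add_finrank _ _).trans ?_
    exact Nat.add_le_add_left ((Submodule.finrank_map_le _ _).trans hTl) _
  · rintro _ ⟨f, ⟨hf, hf2⟩, rfl⟩
    refine aux_div α v hα hv I _ _ ?_ (hS f hf)
    have hf3 : LinearMap.funLeft F F h f = 0 := hf2
    have hz : ∀ j, f (h j) = 0 := fun j => congrFun hf3 j
    rw [tw]
    simpa [hz] using hlow f

theorem aux_arith (ℓ s x : ℕ) (h1 : 1 ≤ ℓ) (hs : ℓ ≤ s)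
    (hx : x ≤ (s + s - 1) + (s - ℓ) * ℓ + (ℓ + 1) * ℓ / 2) :
    x ≤ (ℓ + 2) * s - 1 - ℓ * (ℓ - 1) / 2 := by
  obtain ⟨r, rfl⟩ := Nat.exists_eq_add_of_le hs
  obtain ⟨p, rfl⟩ := Nat.exists_eq_add_of_le' h1
  obtain ⟨T, hT⟩ : ∃ T, (p + 1) * p = 2 * T := by
    obtain ⟨T, hT⟩ := Nat.even_mul_succ_self p
    exact ⟨T, by rw [mul_comm, hT]; ring⟩
  have e1 : (p + 1) * (p + 1 - 1) / 2 = T := by simp [hT]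
  have e2 : (p + 1 + 1) * (p + 1) / 2 = T + p + 1 := by
    rw [show (p + 1 + 1) * (p + 1) = 2 * (T + p + 1) by linarith]
    simp
  rw [e2] at hx
  rw [e1]
  have e3 : (p + 1 + 2) * (p + 1 + r) = 2 * (p + 1 + r) + r * (p + 1) + 2 * T + p + 1 := by
    rw [← hT]; ring
  rw [e3]
  simp only [Nat.add_sub_cancel_left] at hx
  omega

/-- Upper bound for the Schur square of a shortening of a TGRS code with `ℓ` twists,
where `t_max` is the largest entry of the twist vector `t`, `|I| ≤ k − ℓ` and
`dim C_I = k − |I|`. -/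
theorem stmt11 {F : Type*} [Field F] [Fintype F] {n k ℓ : ℕ}
    (hℓk : ℓ ≤ k) (hkn : k ≤ n) (hnq : n ≤ Fintype.card F)
    (α v : Fin n → F) (hα : Function.Injective α) (hv : ∀ i, v i ≠ 0)
    (h : Fin ℓ → Fin k) (hh : Function.Injective h)
    (t : Fin ℓ → ℕ) (ht : Function.Injective t)
    (ht1 : ∀ j, 1 ≤ t j) (ht2 : ∀ j, t j ≤ n - k)
    (η : Fin ℓ → F) (hη : ∀ j, η j ≠ 0)
    (tmax : ℕ) (htmax : ∀ j, t j ≤ tmax) (htmax' : ∃ j, t j = tmax)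
    (I : Finset (Fin n)) (hI : I.card ≤ k - ℓ)
    (hdim : Module.finrank F
      (shorten ((LinearMap.range (twistedMap k t h η)).map (ev α v)) (I : Set (Fin n))) =
        k - I.card) :
    Module.finrank F
        (schurProduct F
          (shorten ((LinearMap.range (twistedMap k t h η)).map (ev α v)) (I : Set (Fin n)))
          (shorten ((LinearMap.range (twistedMap k t h η)).map (ev α v)) (I : Set (Fin n)))) ≤
      min (min ((ℓ + 2) * (k - I.card) - 1 - ℓ * (ℓ - 1) / 2)
          (2 * k + tmax - 1 - 2 * I.card + ℓ * (ℓ + 1) / 2))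
        (2 * (k + tmax - I.card) - 1) := by
  set D := shorten ((LinearMap.range (twistedMap k t h η)).map (ev α v)) (I : Set (Fin n)) with hD
  obtain ⟨j0, hj0⟩ := htmax'
  have hℓ : 1 ≤ ℓ := by have := j0.2; omega
  have htp : 1 ≤ tmax := hj0 ▸ ht1 j0
  obtain ⟨w, hDw, D1, hD1, hr, hD1w⟩ := aux_main α v hα hv h t η tmax htmax htp I D hD
  obtain ⟨D0, hD01, hD0⟩ := aux_sub D1 (k - I.card - ℓ) (by omega)
  obtain ⟨G, hG, hGr⟩ := aux_compl D0 D (hD01.trans hD1)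
  have hGl : Module.finrank F G = ℓ := by omega
  have hGD : G ≤ D := hG ▸ le_sup_right
  have hGG : Module.finrank F (G * G : Submodule F _) ≤ (ℓ + 1) * ℓ / 2 := by
    have := aux_sq G
    rwa [hGl, Nat.choose_two_right] at this
  have hc : ℓ * (ℓ + 1) / 2 = (ℓ + 1) * ℓ / 2 := by rw [mul_comm]
  rw [aux_schur]
  refine le_min (le_min ?_ ?_) ?_
  · apply aux_arith ℓ (k - I.card) _ hℓ (by omega)
    have h1 : D * D ≤ D0 * D0 ⊔ D0 * G ⊔ G * G := by
      conv_lhs => rw [← hG]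
      rw [Submodule.sup_mul, Submodule.mul_sup, Submodule.mul_sup, mul_comm G D0]
      refine sup_le le_sup_left (sup_le (le_sup_right.trans le_sup_left) le_sup_right)
    have h2 := Submodule.finrank_mono h1
    have h3 := Submodule.finrank_add_le_finrank_add_finrank (D0 * D0 ⊔ D0 * G) (G * G)
    have h4 := Submodule.finrank_add_le_finrank_add_finrank (D0 * D0) (D0 * G)
    have h5 := aux_deg _ _ _ _ _ _ (hD01.trans hD1w) (hD01.trans hD1w)
    have h6 := aux_mul D0 G
    rw [hD0, hGl] at h6
    omega
  · have h1 : D * D ≤ D0 * D ⊔ G * G := by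
      conv_lhs => rw [← hG]
      rw [Submodule.sup_mul, hG]
      refine sup_le le_sup_left ?_
      conv_lhs => rw [← hG]
      rw [Submodule.mul_sup]
      refine sup_le ?_ le_sup_right
      rw [mul_comm]
      exact (mul_le_mul' le_rfl hGD).trans le_sup_left
    have h2 := Submodule.finrank_mono h1
    have h3 := Submodule.finrank_add_le_finrank_add_finrank (D0 * D) (G * G)
    have h5 := aux_deg _ _ _ _ _ _ (hD01.trans hD1w) hDw
    omega
  · have h5 := aux_deg _ _ _ _ _ _ hDw hDw
    omega
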